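/- Let (Z,E) be a 2-partition with Z refining {V1,V2,V3}, and let G be a partition of the edge set of the complete bipartite graph V1 × V2 such that E_3 ≺_δ G. If (Z,E) is ⟨δ⟩-good, then there exists G ∈ G such that the vertex partition Z_1 ∪ Z_2 is a ⟨3δ⟩-regular partition of the bipartite graph G. -/

import Mathlib

open scoped Classical

noncomputable section

/-- The number of edges of a bipartite graph `G` between vertex subsets `A` and `B`. -/
def bmEdges {α β : Type*} (G : Finset (α × β)) (A : Finset α) (B : Finset β) : ℕ :=
  (G.filter fun p => p.1 ∈ A ∧ p.2 ∈ B).card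

/-- The edge density of a bipartite graph `G` between `A` and `B`. -/
def bmDens {α β : Type*} (G : Finset (α × β)) (A : Finset α) (B : Finset β) : ℝ :=
  (bmEdges G A B : ℝ) / ((A.card : ℝ) * (B.card : ℝ))

/-- `⟨δ⟩`-regularity of a bipartite graph `G` on vertex classes `(A, B)`:
for all `A' ⊆ A`, `B' ⊆ B` with `|A'| ≥ δ|A|`, `|B'| ≥ δ|B|` we have
`d_G(A',B') ≥ (1/2) d_G(A,B)`. -/
def DeltaReg {α β : Type*} (δ : ℝ) (G : Finset (α × β)) (A : Finset α) (B : Finset β) : Prop :=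
  ∀ A' ⊆ A, ∀ B' ⊆ B, δ * (A.card : ℝ) ≤ (A'.card : ℝ) → δ * (B.card : ℝ) ≤ (B'.card : ℝ) →
    bmDens G A' B' ≥ (1 / 2) * bmDens G A B

/-- Szemerédi `ε`-regularity of a bipartite graph on `(A, B)`. -/
def SzReg {α β : Type*} (ε : ℝ) (G : Finset (α × β)) (A : Finset α) (B : Finset β) : Prop :=
  ∀ A' ⊆ A, ∀ B' ⊆ B, ε * (A.card : ℝ) ≤ (A'.card : ℝ) → ε * (B.card : ℝ) ≤ (B'.card : ℝ) →
    |bmDens G A' B' - bmDens G A B| ≤ ε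

/-- `P` is a partition of the finite set `S` (into nonempty parts). -/
def IsPartition {α : Type*} (P : Finset (Finset α)) (S : Finset α) : Prop :=
  (∀ p ∈ P, p.Nonempty) ∧ (∀ p ∈ P, p ⊆ S) ∧ ∀ v ∈ S, ∃! p, p ∈ P ∧ v ∈ p

/-- `Q` refines `P`: every member of `Q` is contained in a member of `P`. -/
def Refines {α : Type*} (Q P : Finset (Finset α)) : Prop :=
  ∀ q ∈ Q, ∃ p ∈ P, q ⊆ p

/-- All parts of `P` have the same size. -/
def EquitableParts {α : Type*} (P : Finset (Finset α)) : Prop :=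
  ∀ p ∈ P, ∀ q ∈ P, p.card = q.card

/-- `S ⊆_β T`, i.e. `|S \ T| < β |S|`. -/
def ApproxSub {α : Type*} [DecidableEq α] (β' : ℝ) (S T : Finset α) : Prop :=
  ((S \ T).card : ℝ) < β' * (S.card : ℝ)

/-- `S ∈_β P`, i.e. `S ⊆_β p` for some `p ∈ P`. -/
def ApproxMem {α : Type*} [DecidableEq α] (β' : ℝ) (S : Finset α) (P : Finset (Finset α)) :
    Prop :=
  ∃ p ∈ P, ApproxSub β' S p

/-- `Q ≺_β P` for partitions `Q`, `P` of the set `S`. -/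
def ApproxRefines {α : Type*} [DecidableEq α] (β' : ℝ) (Q P : Finset (Finset α))
    (S : Finset α) : Prop :=
  ∑ q ∈ Q.filter fun q => ¬ ApproxMem β' q P, (q.card : ℝ) ≤ β' * (S.card : ℝ)

/-- The vertex partition `P ∪ Q` of a bipartite graph `G` on vertex classes `(L, R)` is
`⟨δ⟩`-regular: one can add/remove at most `δ·e(G)` edges so that the bipartite graph induced
on each pair of distinct parts is `⟨δ⟩`-regular. -/
def DeltaRegPartition {α β : Type*} [DecidableEq α] [DecidableEq β]
    (δ : ℝ) (G : Finset (α × β)) (L : Finset α) (R : Finset β)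
    (P : Finset (Finset α)) (Q : Finset (Finset β)) : Prop :=
  ∃ G' : Finset (α × β), G' ⊆ L ×ˢ R ∧
    ((G' \ G).card : ℝ) + ((G \ G').card : ℝ) ≤ δ * (G.card : ℝ) ∧
    ∀ A ∈ P, ∀ B ∈ Q, DeltaReg δ G' A B

/-- The vertex partition `P ∪ Q` of a bipartite graph `G` is perfectly `⟨δ⟩`-regular:
without modifying any edges, each pair of distinct parts induces a `⟨δ⟩`-regular graph. -/
def PerfectDeltaRegPartition {α β : Type*} (δ : ℝ) (G : Finset (α × β))
    (P : Finset (Finset α)) (Q : Finset (Finset β)) : Prop :=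
  ∀ A ∈ P, ∀ B ∈ Q, DeltaReg δ G A B

/-- A 2-partition `(Z, E)` on the vertex set `S`: `Z` partitions `S`, the members of `E` are
pairwise edge-disjoint bipartite graphs between distinct parts of `Z`, and for all distinct
`Z1, Z2 ∈ Z` the complete bipartite graph `Z1 × Z2` is the union of the members of `E`
between `Z1` and `Z2`. -/
def Is2Partition {α : Type*} [DecidableEq α]
    (Z : Finset (Finset α)) (E : Finset (Finset (α × α))) (S : Finset α) : Prop :=
  IsPartition Z S ∧
  (∀ g ∈ E, ∃ Z1 ∈ Z, ∃ Z2 ∈ Z, Z1 ≠ Z2 ∧ g ⊆ Z1 ×ˢ Z2) ∧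
  (∀ g ∈ E, ∀ g' ∈ E, g ≠ g' → Disjoint g g') ∧
  ∀ Z1 ∈ Z, ∀ Z2 ∈ Z, Z1 ≠ Z2 → ∀ p ∈ Z1 ×ˢ Z2, ∃ g ∈ E, g ⊆ Z1 ×ˢ Z2 ∧ p ∈ g

/-- The parts of `Z` contained in `A` (e.g. `Z_i`, the restriction of `Z` to `V_i`). -/
def partsIn {α : Type*} [DecidableEq α] (Z : Finset (Finset α)) (A : Finset α) :
    Finset (Finset α) :=
  Z.filter fun z => z ⊆ A

/-- The members of `E` contained in `A × B` (e.g. `E_i`). -/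
def graphsIn {α : Type*} [DecidableEq α] (E : Finset (Finset (α × α))) (A B : Finset α) :
    Finset (Finset (α × α)) :=
  E.filter fun g => g ⊆ A ×ˢ B

/-- `H` is a 3-partite 3-graph on the (disjoint) vertex classes `(V1, V2, V3)`. -/
def Is3Partite {α : Type*} (H : Finset (α × α × α)) (V1 V2 V3 : Finset α) : Prop :=
  (Disjoint V1 V2 ∧ Disjoint V1 V3 ∧ Disjoint V2 V3) ∧ H ⊆ V1 ×ˢ V2 ×ˢ V3

/-- The auxiliary bipartite graph `G_H^1` on `(V2 × V3, V1)`. -/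
def GH1 {α : Type*} [DecidableEq α] (H : Finset (α × α × α)) : Finset ((α × α) × α) :=
  H.image fun t => ((t.2.1, t.2.2), t.1)

/-- The auxiliary bipartite graph `G_H^2` on `(V1 × V3, V2)`. -/
def GH2 {α : Type*} [DecidableEq α] (H : Finset (α × α × α)) : Finset ((α × α) × α) :=
  H.image fun t => ((t.1, t.2.2), t.2.1)

/-- The auxiliary bipartite graph `G_H^3` on `(V1 × V2, V3)`. -/
def GH3 {α : Type*} [DecidableEq α] (H : Finset (α × α × α)) : Finset ((α × α) × α) :=
  H.image fun t => ((t.1, t.2.1), t.2.2)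

/-- The 2-partition `(Z, E)` is `⟨δ⟩`-good: every bipartite graph in `E` (between any two
distinct vertex clusters of `Z`) is `⟨δ⟩`-regular. -/
def DeltaGood {α : Type*} [DecidableEq α] (δ : ℝ)
    (Z : Finset (Finset α)) (E : Finset (Finset (α × α))) : Prop :=
  ∀ g ∈ E, ∀ Z1 ∈ Z, ∀ Z2 ∈ Z, Z1 ≠ Z2 → g ⊆ Z1 ×ˢ Z2 → DeltaReg δ g Z1 Z2

/-- `(Z, E)` is a `⟨δ⟩`-regular partition of the 3-partite 3-graph `H` on `(V1, V2, V3)`: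
it is a `⟨δ⟩`-good 2-partition with `Z ≺ {V1, V2, V3}` and, for each `1 ≤ i ≤ 3`,
`E_i ∪ Z_i` is a `⟨δ⟩`-regular vertex partition of `G_H^i`. -/
def Delta3RegPartition {α : Type*} [DecidableEq α] (δ : ℝ) (H : Finset (α × α × α))
    (V1 V2 V3 : Finset α) (Z : Finset (Finset α)) (E : Finset (Finset (α × α))) : Prop :=
  Is2Partition Z E (V1 ∪ V2 ∪ V3) ∧ Refines Z {V1, V2, V3} ∧ DeltaGood δ Z E ∧
  DeltaRegPartition δ (GH1 H) (V2 ×ˢ V3) V1 (graphsIn E V2 V3) (partsIn Z V1) ∧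
  DeltaRegPartition δ (GH2 H) (V1 ×ˢ V3) V2 (graphsIn E V1 V3) (partsIn Z V2) ∧
  DeltaRegPartition δ (GH3 H) (V1 ×ˢ V2) V3 (graphsIn E V1 V2) (partsIn Z V3)

/-- The tower function: `twr 0 = 1` and `twr (x+1) = 2 ^ twr x`. -/
def twr : ℕ → ℕ
  | 0 => 1
  | n + 1 => 2 ^ twr n

/-- The wowzer function: `twr` iterated `x` times, applied to `1`. -/
def wow (x : ℕ) : ℕ := twr^[x] 1

/-- The set of triangles of the triad given by bipartite graphs `e1`, `e2`, `e3`: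
triples `(a, b, c)` with `(a,b) ∈ e1`, `(a,c) ∈ e2` and `(b,c) ∈ e3`. -/
def tri {α β γ : Type*} [DecidableEq α] [DecidableEq β] [DecidableEq γ]
    (e1 : Finset (α × β)) (e2 : Finset (α × γ)) (e3 : Finset (β × γ)) :
    Finset (α × β × γ) :=
  ((e1 ×ˢ e3).filter fun q => q.1.2 = q.2.1 ∧ (q.1.1, q.2.2) ∈ e2).image
    fun q => (q.1.1, q.1.2, q.2.2)

/-- The density `d_H(P)` of a triad `P = (e1, e2, e3)` in the 3-graph `H`. -/
def triDens {α : Type*} [DecidableEq α] (H : Finset (α × α × α))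
    (e1 e2 e3 : Finset (α × α)) : ℝ :=
  ((H ∩ tri e1 e2 e3).card : ℝ) / ((tri e1 e2 e3).card : ℝ)

/-- The triad `(e1, e2, e3)` is `ε`-regular in the 3-graph `H`: every subtriad `(f1, f2, f3)`
with `t(P') ≥ ε t(P)` satisfies `|d_H(P') - d_H(P)| ≤ ε`. -/
def TriadReg {α : Type*} [DecidableEq α] (ε : ℝ) (H : Finset (α × α × α))
    (e1 e2 e3 : Finset (α × α)) : Prop :=
  ∀ f1 ⊆ e1, ∀ f2 ⊆ e2, ∀ f3 ⊆ e3,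
    ε * ((tri e1 e2 e3).card : ℝ) ≤ ((tri f1 f2 f3).card : ℝ) →
    |triDens H f1 f2 f3 - triDens H e1 e2 e3| ≤ ε

/-- The triads of the 2-partition `(Z, E)`: triples of members of `E` forming a tripartite
graph on three distinct parts of `Z`. -/
def triads {α : Type*} [DecidableEq α] (Z : Finset (Finset α))
    (E : Finset (Finset (α × α))) :
    Finset (Finset (α × α) × Finset (α × α) × Finset (α × α)) :=
  (E ×ˢ E ×ˢ E).filter fun e => ∃ Z1 ∈ Z, ∃ Z2 ∈ Z, ∃ Z3 ∈ Z,
    Z1 ≠ Z2 ∧ Z1 ≠ Z3 ∧ Z2 ≠ Z3 ∧ e.1 ⊆ Z1 ×ˢ Z2 ∧ e.2.1 ⊆ Z1 ×ˢ Z3 ∧ e.2.2 ⊆ Z2 ×ˢ Z3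

/-- An `(ℓ, t, ε₂)`-equipartition on `S`: a 2-partition `(Z, E)` where `Z` is an equitable
partition of order `t` and every graph in `E` is `ε₂`-regular of density `ℓ⁻¹ ± ε₂`. -/
def IsEquipartition23 {α : Type*} [DecidableEq α] (ℓ t : ℕ) (ε₂ : ℝ)
    (Z : Finset (Finset α)) (E : Finset (Finset (α × α))) (S : Finset α) : Prop :=
  Is2Partition Z E S ∧ EquitableParts Z ∧ Z.card = t ∧
  ∀ g ∈ E, ∀ Z1 ∈ Z, ∀ Z2 ∈ Z, Z1 ≠ Z2 → g ⊆ Z1 ×ˢ Z2 →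
    SzReg ε₂ g Z1 Z2 ∧ |bmDens g Z1 Z2 - 1 / (ℓ : ℝ)| ≤ ε₂

/-- The `(ℓ,t,ε₂)`-equipartition `(Z, E)` is an `ε`-regular partition of the 3-graph `H`
with vertex set `S` (Frankl–Rödl): `Σ t(P) ≤ ε |S|³`, summed over non-`ε`-regular triads. -/
def FRRegPartition {α : Type*} [DecidableEq α] (ε : ℝ) (H : Finset (α × α × α))
    (S : Finset α) (Z : Finset (Finset α)) (E : Finset (Finset (α × α))) : Prop :=
  ∑ e ∈ (triads Z E).filter fun e => ¬ TriadReg ε H e.1 e.2.1 e.2.2,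
    ((tri e.1 e.2.1 e.2.2).card : ℝ) ≤ ε * (S.card : ℝ) ^ 3

/-- The function `f` from the definition of quasirandomness of a triad. -/
def fQ {α : Type*} [DecidableEq α] (H : Finset (α × α × α)) (e1 e2 e3 : Finset (α × α))
    (x y z : α) : ℝ :=
  if (x, y, z) ∈ tri e1 e2 e3 then
    (if (x, y, z) ∈ H then 1 - triDens H e1 e2 e3 else -triDens H e1 e2 e3)
  else 0

/-- The octahedron sum from the definition of quasirandomness. -/
def octSum {α : Type*} [DecidableEq α] (H : Finset (α × α × α)) (e1 e2 e3 : Finset (α × α))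
    (X Y Z : Finset α) : ℝ :=
  ∑ x0 ∈ X, ∑ x1 ∈ X, ∑ y0 ∈ Y, ∑ y1 ∈ Y, ∑ z0 ∈ Z, ∑ z1 ∈ Z,
    fQ H e1 e2 e3 x0 y0 z0 * fQ H e1 e2 e3 x0 y0 z1 * fQ H e1 e2 e3 x0 y1 z0 *
      fQ H e1 e2 e3 x0 y1 z1 * fQ H e1 e2 e3 x1 y0 z0 * fQ H e1 e2 e3 x1 y0 z1 *
      fQ H e1 e2 e3 x1 y1 z0 * fQ H e1 e2 e3 x1 y1 z1

/-- The triad `(e1, e2, e3)` on vertex classes `(X, Y, Z)` with `d(e1) = d(e2) = d(e3) = d`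
and `|X| = |Y| = |Z| = n` is `a`-quasirandom in `H`: the octahedron sum is at most
`a d¹² n⁶`. -/
def Quasirandom {α : Type*} [DecidableEq α] (a : ℝ) (H : Finset (α × α × α))
    (e1 e2 e3 : Finset (α × α)) (X Y Z : Finset α) : Prop :=
  ∀ (d : ℝ) (n : ℕ), bmDens e1 X Y = d → bmDens e2 X Z = d → bmDens e3 Y Z = d →
    X.card = n → Y.card = n → Z.card = n →
    octSum H e1 e2 e3 X Y Z ≤ a * d ^ 12 * (n : ℝ) ^ 6

/-- The `(ℓ,t,ε₂)`-equipartition `(Z, E)` is an `a`-quasirandom partition of the 3-graph `H`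
with vertex set `S`: `Σ t(P) ≤ a |S|³`, summed over non-`a`-quasirandom triads. -/
def QuasirandomPartition {α : Type*} [DecidableEq α] (a : ℝ) (H : Finset (α × α × α))
    (S : Finset α) (Z : Finset (Finset α)) (E : Finset (Finset (α × α))) : Prop :=
  ∑ e ∈ (E ×ˢ E ×ˢ E).filter fun e => ∃ Z1 ∈ Z, ∃ Z2 ∈ Z, ∃ Z3 ∈ Z,
      Z1 ≠ Z2 ∧ Z1 ≠ Z3 ∧ Z2 ≠ Z3 ∧
      e.1 ⊆ Z1 ×ˢ Z2 ∧ e.2.1 ⊆ Z1 ×ˢ Z3 ∧ e.2.2 ⊆ Z2 ×ˢ Z3 ∧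
      ¬ Quasirandom a H e.1 e.2.1 e.2.2 Z1 Z2 Z3,
    ((tri e.1 e.2.1 e.2.2).card : ℝ) ≤ a * (S.card : ℝ) ^ 3

/-- `e(i) = 2^(i+10)`. -/
def efn (i : ℕ) : ℕ := 2 ^ (i + 10)

/-- `t(1) = 2^250` and `t(i+1) = 2^(t(i)/e(i))` for `i ≥ 1`. -/
def tfn : ℕ → ℕ
  | 0 => 0
  | 1 => 2 ^ 250
  | n + 2 => 2 ^ (tfn (n + 1) / efn (n + 1))

/-- `w(1) = 1` and `w(i+1) = w*(i) = t(w(i))/e(i)` for `i ≥ 1`. -/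
def wfn : ℕ → ℕ
  | 0 => 0
  | 1 => 1
  | n + 2 => tfn (wfn (n + 1)) / efn (n + 1)

/-- `w*(s) = t(w(s))/e(s)`. -/
def wstar (s : ℕ) : ℕ := tfn (wfn s) / efn s

end

/-!
Assign each `e ∈ E_3` with `e ∈_δ G` to a part `Φ e ∈ G` with `e ⊆_δ Φ e`, and for `g ∈ G` let `U_g`
be the union of the graphs assigned to `g`. A union of edge-disjoint `⟨δ⟩`-regular graphs is
`⟨δ⟩`-regular, so `U_g` is a candidate for the modification of `g`. An edge is charged to a
symmetric difference `U_g ∆ g` once if it lies in an unassigned graph, and twice (as added to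
`U_{Φ e}` and as removed from its own part) if it lies in some `e \ Φ e`. Hence these differences
have total size at most `δ|V1||V2| + 2δ|V1||V2| = 3δ ∑ |g|`, and by averaging some `g ∈ G` has
`|U_g ∆ g| ≤ 3δ|g|`.
-/

section Density

variable {ι α β : Type*} {δ δ' : ℝ} {s : Finset ι} {f : ι → Finset (α × β)}
  {G : Finset (α × β)} {A : Finset α} {B : Finset β}

lemma bmDens_nonneg (G : Finset (α × β)) (A : Finset α) (B : Finset β) : 0 ≤ bmDens G A B := by
  unfold bmDens
  positivity

lemma exists_mem_of_bmDens_ne_zero (h : bmDens G A B ≠ 0) : ∃ p ∈ G, p.1 ∈ A ∧ p.2 ∈ B := by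
  contrapose! h
  have hedges : bmEdges G A B = 0 :=
    Finset.card_eq_zero.2 <| Finset.filter_eq_empty_iff.2 fun p hp hpAB => h p hp hpAB.1 hpAB.2
  rw [bmDens, hedges, Nat.cast_zero, zero_div]

lemma bmEdges_biUnion [DecidableEq α] [DecidableEq β] (hf : (s : Set ι).PairwiseDisjoint f)
    (A : Finset α) (B : Finset β) : bmEdges (s.biUnion f) A B = ∑ i ∈ s, bmEdges (f i) A B := by
  unfold bmEdges
  rw [Finset.filter_biUnion]
  exact Finset.card_biUnion (hf.mono fun i => by simp)

lemma bmDens_biUnion [DecidableEq α] [DecidableEq β] (hf : (s : Set ι).PairwiseDisjoint f)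
    (A : Finset α) (B : Finset β) : bmDens (s.biUnion f) A B = ∑ i ∈ s, bmDens (f i) A B := by
  unfold bmDens
  rw [bmEdges_biUnion hf, Nat.cast_sum, Finset.sum_div]

lemma deltaReg_of_bmDens_eq_zero (h : bmDens G A B = 0) : DeltaReg δ G A B := by
  intro A' _ B' _ _ _
  rw [h, mul_zero]
  exact bmDens_nonneg G A' B'

lemma DeltaReg.mono (hδ : δ ≤ δ') (h : DeltaReg δ G A B) : DeltaReg δ' G A B :=
  fun A' hA' B' hB' hcardA hcardB => h A' hA' B' hB'
    ((mul_le_mul_of_nonneg_right hδ A.card.cast_nonneg).trans hcardA)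
    ((mul_le_mul_of_nonneg_right hδ B.card.cast_nonneg).trans hcardB)

lemma deltaReg_biUnion [DecidableEq α] [DecidableEq β] (hf : (s : Set ι).PairwiseDisjoint f)
    (hreg : ∀ i ∈ s, DeltaReg δ (f i) A B) : DeltaReg δ (s.biUnion f) A B := by
  intro A' hA' B' hB' hcardA hcardB
  rw [bmDens_biUnion hf, bmDens_biUnion hf, Finset.mul_sum]
  exact Finset.sum_le_sum fun i hi => hreg i hi A' hA' B' hB' hcardA hcardB

end Density

section Partition

variable {α : Type*} {P Q : Finset (Finset α)} {S : Finset α}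

lemma IsPartition.eq_of_mem (hP : IsPartition P S) {p p' : Finset α} (hp : p ∈ P) (hp' : p' ∈ P)
    {a : α} (ha : a ∈ p) (ha' : a ∈ p') : p = p' :=
  (hP.2.2 a (hP.2.1 p hp ha)).unique ⟨hp, ha⟩ ⟨hp', ha'⟩

lemma IsPartition.exists_mem (hP : IsPartition P S) {a : α} (ha : a ∈ S) : ∃ p ∈ P, a ∈ p :=
  (hP.2.2 a ha).exists

lemma IsPartition.pairwiseDisjoint (hP : IsPartition P S) :
    (P : Set (Finset α)).PairwiseDisjoint id := fun _ hp _ hp' hne =>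
  Finset.disjoint_left.2 fun _ ha ha' => hne (hP.eq_of_mem hp hp' ha ha')

lemma IsPartition.biUnion_eq [DecidableEq α] (hP : IsPartition P S) : P.biUnion id = S :=
  (Finset.biUnion_subset.2 hP.2.1).antisymm fun _ ha => Finset.mem_biUnion.2 (hP.exists_mem ha)

lemma IsPartition.sum_card (hP : IsPartition P S) : ∑ p ∈ P, p.card = S.card := by
  rw [← hP.biUnion_eq, Finset.card_biUnion hP.pairwiseDisjoint]
  rfl

lemma Refines.subset_of_mem (hQP : Refines Q P) (hP : (P : Set (Finset α)).PairwiseDisjoint id)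
    {p q : Finset α} (hp : p ∈ P) (hq : q ∈ Q) {a : α} (hap : a ∈ p) (haq : a ∈ q) : q ⊆ p := by
  obtain ⟨p', hp', hqp'⟩ := hQP q hq
  rwa [hP.elim_finset hp hp' a hap (hqp' haq)]

end Partition

section ApproxRefines

variable {α : Type*} [DecidableEq α] {δ : ℝ} {P Q D R : Finset (Finset α)} {S : Finset α}
  {Φ : Finset α → Finset α}

/-- The union `U_p` of the members of the family `D` that the assignment `Φ` sends to `p`; it is
the approximation to `p` by members of `D`. -/
def fiberUnion (D : Finset (Finset α)) (Φ : Finset α → Finset α) (p : Finset α) : Finset α :=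
  (D.filter fun d => Φ d = p).biUnion id

lemma fiberUnion_sdiff_subset (p : Finset α) :
    fiberUnion D Φ p \ p ⊆ (D.filter fun d => Φ d = p).biUnion fun d => d \ Φ d := by
  intro a ha
  simp only [fiberUnion, Finset.mem_sdiff, Finset.mem_biUnion, Finset.mem_filter, id] at ha ⊢
  obtain ⟨⟨d, ⟨hd, rfl⟩, had⟩, hap⟩ := ha
  exact ⟨d, ⟨hd, rfl⟩, had, hap⟩

lemma sum_card_fiberUnion_sdiff_le (hΦ : ∀ d ∈ D, Φ d ∈ P) :
    ∑ p ∈ P, (fiberUnion D Φ p \ p).card ≤ ∑ d ∈ D, (d \ Φ d).card := by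
  rw [← Finset.sum_fiberwise_of_maps_to hΦ]
  exact Finset.sum_le_sum fun p _ =>
    (Finset.card_le_card (fiberUnion_sdiff_subset p)).trans Finset.card_biUnion_le

lemma IsPartition.biUnion_sdiff_fiberUnion_subset (hP : IsPartition P S)
    (hS : S ⊆ D.biUnion id ∪ R.biUnion id) (hΦ : ∀ d ∈ D, Φ d ∈ P) :
    (P.biUnion fun p => p \ fiberUnion D Φ p) ⊆ (D.biUnion fun d => d \ Φ d) ∪ R.biUnion id := by
  intro a ha
  obtain ⟨p, hp, hap⟩ := Finset.mem_biUnion.1 ha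
  obtain ⟨hap, haU⟩ := Finset.mem_sdiff.1 hap
  refine (Finset.mem_union.1 (hS (hP.2.1 p hp hap))).elim
    (fun haD => Finset.mem_union_left _ ?_) (Finset.mem_union_right _)
  obtain ⟨d, hd, had⟩ := Finset.mem_biUnion.1 haD
  refine Finset.mem_biUnion.2 ⟨d, hd, Finset.mem_sdiff.2 ⟨had, fun haΦ => haU ?_⟩⟩
  have hΦd : Φ d = p := hP.eq_of_mem (hΦ d hd) hp haΦ hap
  exact Finset.mem_biUnion.2 ⟨d, Finset.mem_filter.2 ⟨hd, hΦd⟩, had⟩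

lemma IsPartition.sum_card_sdiff_fiberUnion_le (hP : IsPartition P S)
    (hS : S ⊆ D.biUnion id ∪ R.biUnion id) (hΦ : ∀ d ∈ D, Φ d ∈ P) :
    ∑ p ∈ P, (p \ fiberUnion D Φ p).card ≤ ∑ d ∈ D, (d \ Φ d).card + ∑ r ∈ R, r.card := by
  have hdisj : (P : Set (Finset α)).PairwiseDisjoint fun p => p \ fiberUnion D Φ p :=
    hP.pairwiseDisjoint.mono fun _ => Finset.sdiff_subset
  calc ∑ p ∈ P, (p \ fiberUnion D Φ p).card
      = (P.biUnion fun p => p \ fiberUnion D Φ p).card := (Finset.card_biUnion hdisj).symm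
    _ ≤ ((D.biUnion fun d => d \ Φ d) ∪ R.biUnion id).card :=
        Finset.card_le_card (hP.biUnion_sdiff_fiberUnion_subset hS hΦ)
    _ ≤ (D.biUnion fun d => d \ Φ d).card + (R.biUnion id).card := Finset.card_union_le _ _
    _ ≤ ∑ d ∈ D, (d \ Φ d).card + ∑ r ∈ R, r.card :=
        add_le_add Finset.card_biUnion_le Finset.card_biUnion_le

lemma ApproxRefines.nonneg (h : ApproxRefines δ Q P S) (hS : S.Nonempty) : 0 ≤ δ :=
  nonneg_of_mul_nonneg_left ((Finset.sum_nonneg fun _ _ => Nat.cast_nonneg _).trans h)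
    (Nat.cast_pos.2 hS.card_pos)

lemma sum_card_sdiff_le_of_approxSub (hδ : 0 ≤ δ) (hD : (D : Set (Finset α)).PairwiseDisjoint id)
    (hDS : ∀ d ∈ D, d ⊆ S) (hΦ : ∀ d ∈ D, ApproxSub δ d (Φ d)) :
    ∑ d ∈ D, ((d \ Φ d).card : ℝ) ≤ δ * S.card := by
  have hcard : ∑ d ∈ D, d.card ≤ S.card :=
    (Finset.card_biUnion hD).symm.trans_le (Finset.card_le_card (Finset.biUnion_subset.2 hDS))
  calc ∑ d ∈ D, ((d \ Φ d).card : ℝ)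
      ≤ ∑ d ∈ D, δ * (d.card : ℝ) := Finset.sum_le_sum fun d hd => (hΦ d hd).le
    _ = δ * (∑ d ∈ D, d.card : ℕ) := by rw [Nat.cast_sum, Finset.mul_sum]
    _ ≤ δ * S.card := by gcongr

lemma ApproxRefines.exists_sum_card_fiberUnion_le (h : ApproxRefines δ Q P S) (hδ : 0 ≤ δ)
    (hQ : (Q : Set (Finset α)).PairwiseDisjoint id) (hQS : Q.biUnion id = S)
    (hP : IsPartition P S) :
    ∃ D ⊆ Q, ∃ Φ : Finset α → Finset α,
      ∑ p ∈ P, (((fiberUnion D Φ p \ p).card : ℝ) + (p \ fiberUnion D Φ p).card) ≤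
        3 * δ * S.card := by
  choose! Φ hΦP hΦsub using fun q (hq : ApproxMem δ q P) => hq
  set D := Q.filter fun q => ApproxMem δ q P
  set R := Q.filter fun q => ¬ ApproxMem δ q P
  have hDQ : D ⊆ Q := Finset.filter_subset _ _
  have hΦD : ∀ d ∈ D, Φ d ∈ P := fun d hd => hΦP d (Finset.mem_filter.1 hd).2
  have hcover : S ⊆ D.biUnion id ∪ R.biUnion id := by
    rw [← Finset.union_biUnion, Finset.filter_union_filter_not_eq, hQS]
  have hassigned : ∑ d ∈ D, ((d \ Φ d).card : ℝ) ≤ δ * S.card :=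
    sum_card_sdiff_le_of_approxSub hδ (hQ.subset hDQ)
      (fun d hd => Finset.biUnion_subset.1 hQS.le d (hDQ hd))
      fun d hd => hΦsub d (Finset.mem_filter.1 hd).2
  have hunassigned : ∑ r ∈ R, (r.card : ℝ) ≤ δ * S.card := h
  have hadded : ∑ p ∈ P, ((fiberUnion D Φ p \ p).card : ℝ) ≤ ∑ d ∈ D, ((d \ Φ d).card : ℝ) :=
    mod_cast sum_card_fiberUnion_sdiff_le hΦD
  have hremoved : ∑ p ∈ P, ((p \ fiberUnion D Φ p).card : ℝ) ≤
      ∑ d ∈ D, ((d \ Φ d).card : ℝ) + ∑ r ∈ R, (r.card : ℝ) :=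
    mod_cast hP.sum_card_sdiff_fiberUnion_le hcover hΦD
  refine ⟨D, hDQ, Φ, ?_⟩
  rw [Finset.sum_add_distrib]
  linarith

theorem ApproxRefines.exists_subfamily_card_sdiff_le (h : ApproxRefines δ Q P S)
    (hS : S.Nonempty) (hQ : (Q : Set (Finset α)).PairwiseDisjoint id) (hQS : Q.biUnion id = S)
    (hP : IsPartition P S) :
    ∃ p ∈ P, ∃ D ⊆ Q,
      ((D.biUnion id \ p).card : ℝ) + (p \ D.biUnion id).card ≤ 3 * δ * p.card := by
  obtain ⟨D, hDQ, Φ, htotal⟩ := h.exists_sum_card_fiberUnion_le (h.nonneg hS) hQ hQS hP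
  have hPne : P.Nonempty := (hP.exists_mem hS.choose_spec).imp fun _ => And.left
  rw [← hP.sum_card, Nat.cast_sum, Finset.mul_sum] at htotal
  obtain ⟨p, hp, hcost⟩ := Finset.exists_le_of_sum_le hPne htotal
  exact ⟨p, hp, D.filter fun d => Φ d = p, (Finset.filter_subset _ _).trans hDQ, hcost⟩

end ApproxRefines

section TwoPartition

variable {α : Type*} [DecidableEq α] {δ : ℝ} {Z 𝒱 : Finset (Finset α)}
  {E : Finset (Finset (α × α))} {S V W A B : Finset α}

lemma Is2Partition.subset_product_of_bmDens_ne_zero (h : Is2Partition Z E S)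
    {e : Finset (α × α)} (he : e ∈ E) (hA : A ∈ Z) (hB : B ∈ Z) (hdens : bmDens e A B ≠ 0) :
    e ⊆ A ×ˢ B := by
  obtain ⟨p, hp, hpA, hpB⟩ := exists_mem_of_bmDens_ne_zero hdens
  obtain ⟨A', hA', B', hB', -, heAB'⟩ := h.2.1 e he
  obtain ⟨hpA', hpB'⟩ := Finset.mem_product.1 (heAB' hp)
  rwa [h.1.eq_of_mem hA hA' hpA hpA', h.1.eq_of_mem hB hB' hpB hpB']

lemma DeltaGood.deltaReg (hgood : DeltaGood δ Z E) (h : Is2Partition Z E S)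
    {e : Finset (α × α)} (he : e ∈ E) (hA : A ∈ Z) (hB : B ∈ Z) (hAB : A ≠ B) :
    DeltaReg δ e A B := by
  by_cases hdens : bmDens e A B = 0
  · exact deltaReg_of_bmDens_eq_zero hdens
  · exact hgood e he A hA B hB hAB (h.subset_product_of_bmDens_ne_zero he hA hB hdens)

lemma Is2Partition.pairwiseDisjoint (h : Is2Partition Z E S) :
    (E : Set (Finset (α × α))).PairwiseDisjoint id :=
  fun e he e' he' => h.2.2.1 e he e' he'

lemma Is2Partition.biUnion_graphsIn (h : Is2Partition Z E S) (hZ : Refines Z 𝒱)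
    (h𝒱 : (𝒱 : Set (Finset α)).PairwiseDisjoint id) (hV : V ∈ 𝒱) (hW : W ∈ 𝒱)
    (hVS : V ⊆ S) (hWS : W ⊆ S) (hVW : Disjoint V W) :
    (graphsIn E V W).biUnion id = V ×ˢ W := by
  refine (Finset.biUnion_subset.2 fun e he => (Finset.mem_filter.1 he).2).antisymm fun p hp => ?_
  obtain ⟨hpV, hpW⟩ := Finset.mem_product.1 hp
  obtain ⟨A, hA, hpA⟩ := h.1.exists_mem (hVS hpV)
  obtain ⟨B, hB, hpB⟩ := h.1.exists_mem (hWS hpW)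
  have hAV : A ⊆ V := hZ.subset_of_mem h𝒱 hV hA hpV hpA
  have hBW : B ⊆ W := hZ.subset_of_mem h𝒱 hW hB hpW hpB
  have hAB : A ≠ B := (hVW.mono hAV hBW).ne (Finset.ne_empty_of_mem hpA)
  obtain ⟨e, he, heAB, hpe⟩ := h.2.2.2 A hA B hB hAB p (Finset.mem_product.2 ⟨hpA, hpB⟩)
  exact Finset.mem_biUnion.2
    ⟨e, Finset.mem_filter.2 ⟨he, heAB.trans (Finset.product_subset_product hAV hBW)⟩, hpe⟩

lemma DeltaGood.deltaReg_biUnion_of_mem_partsIn (hgood : DeltaGood δ Z E) (h : Is2Partition Z E S)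
    {D : Finset (Finset (α × α))} (hD : D ⊆ E) (hVW : Disjoint V W)
    (hA : A ∈ partsIn Z V) (hB : B ∈ partsIn Z W) : DeltaReg δ (D.biUnion id) A B := by
  obtain ⟨hAZ, hAV⟩ := Finset.mem_filter.1 hA
  obtain ⟨hBZ, hBW⟩ := Finset.mem_filter.1 hB
  have hAB : A ≠ B := (hVW.mono hAV hBW).ne (h.1.1 A hAZ).ne_empty
  exact deltaReg_biUnion (h.pairwiseDisjoint.subset hD) fun e he =>
    hgood.deltaReg h (hD he) hAZ hBZ hAB

end TwoPartition

/-- **Claim 3.3.** -/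
theorem uniform_refinement {α : Type*} [DecidableEq α]
    (V1 V2 V3 : Finset α)
    (hd12 : Disjoint V1 V2) (hd13 : Disjoint V1 V3) (hd23 : Disjoint V2 V3)
    (hV1 : V1.Nonempty) (hV2 : V2.Nonempty)
    (Z : Finset (Finset α)) (E : Finset (Finset (α × α)))
    (h2p : Is2Partition Z E (V1 ∪ V2 ∪ V3)) (hZref : Refines Z {V1, V2, V3})
    (G : Finset (Finset (α × α))) (hG : IsPartition G (V1 ×ˢ V2))
    (δ : ℝ) (href : ApproxRefines δ (graphsIn E V1 V2) G (V1 ×ˢ V2))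
    (hgood : DeltaGood δ Z E) :
    ∃ g ∈ G, DeltaRegPartition (3 * δ) g V1 V2 (partsIn Z V1) (partsIn Z V2) := by
  have h𝒱 : (({V1, V2, V3} : Finset (Finset α)) : Set (Finset α)).PairwiseDisjoint id := by
    simp [Set.pairwiseDisjoint_insert, hd12, hd13, hd23]
  have hcover : (graphsIn E V1 V2).biUnion id = V1 ×ˢ V2 :=
    h2p.biUnion_graphsIn hZref h𝒱 (by simp) (by simp)
      (Finset.subset_union_left.trans Finset.subset_union_left)
      (Finset.subset_union_right.trans Finset.subset_union_left) hd12
  have hE3 : graphsIn E V1 V2 ⊆ E := Finset.filter_subset _ _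
  obtain ⟨g, hg, D, hD, hcost⟩ := href.exists_subfamily_card_sdiff_le (hV1.product hV2)
    (h2p.pairwiseDisjoint.subset hE3) hcover hG
  have hδ : δ ≤ 3 * δ := by linarith [href.nonneg (hV1.product hV2)]
  refine ⟨g, hg, D.biUnion id, ?_, hcost, fun A hA B hB => ?_⟩
  · exact (Finset.biUnion_subset_biUnion_of_subset_left id hD).trans hcover.le
  · exact (hgood.deltaReg_biUnion_of_mem_partsIn h2p (hD.trans hE3) hd12 hA hB).mono hδ
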